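/- Let q = 2^h with 3 dividing h, so that F_8 = {x ∈ F_q : x^8 = x} is a subfield of F_q. Let α, β ∈ F_8 \ {0,1} with β ∉ {α, α+1}, and let S be a subgroup of (F_q,+) of order q/4. Assume S + αS = {x ∈ F_q : Tr(k₁x) = 0}, S + βS = {x ∈ F_q : Tr(k₂x) = 0}, αS + βS = {x ∈ F_q : Tr(k₃x) = 0} and (α+1)S + (β+1)S = {x ∈ F_q : Tr(k₄x) = 0} for certain pairwise distinct nonzero k₁, k₂, k₃, k₄ ∈ F_q. Then the system of equations Tr(k₁(X+α)) = 1, Tr(k₂(Y+β)) = 1, Tr(k₃(αY+βX)) = 1, Tr(k₄((α+β)+(β+1)X+(α+1)Y)) = 1 has no solution (X,Y) ∈ F_q². -/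

import Mathlib

open scoped Classical

noncomputable section

variable {K : Type*} [Field K]

/-- The absolute trace-style sum `x + x² + x⁴ + ⋯ + x^(2^(h-1))`
(it lands in the prime subfield `F₂` when `|K| = 2^h`). -/
def Tr (h : ℕ) (x : K) : K := ∑ i ∈ Finset.range h, x ^ 2 ^ i

/-- `F₂`-independence of a tuple of elements of a field of characteristic two:
no nontrivial combination with coefficients `0`/`1` vanishes. -/
def F2Indep {n : ℕ} (v : Fin n → K) : Prop :=
  ∀ c : Fin n → K, (∀ i, c i = 0 ∨ c i = 1) → ∑ i, c i * v i = 0 → ∀ i, c i = 0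

/-- The `F₂`-span of a tuple of elements of a field of characteristic two. -/
def F2Span {n : ℕ} (v : Fin n → K) : Set K :=
  {x | ∃ c : Fin n → K, (∀ i, c i = 0 ∨ c i = 1) ∧ x = ∑ i, c i * v i}

/-- `α·S` for an additive subgroup `S` of the field. -/
def smulSub (α : K) (S : AddSubgroup K) : AddSubgroup K :=
  S.map (AddMonoidHom.mulLeft α)

/-- Points of `PG(2,q)`: one-dimensional subspaces of `K³`. -/
abbrev Pt (K : Type*) [Field K] := Projectivization K (Fin 3 → K)

/-- The point `(a : b : c)` of `PG(2,q)`. -/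
def pt3 (a b c : K) (habc : ¬(a = 0 ∧ b = 0 ∧ c = 0)) : Pt K :=
  Projectivization.mk K ![a, b, c] (fun h0 => habc
    ⟨by simpa using congrFun h0 0, by simpa using congrFun h0 1, by simpa using congrFun h0 2⟩)

/-- The point `(a : b)` of `PG(1,q)`. -/
def pt2 (a b : K) (hab : ¬(a = 0 ∧ b = 0)) : Projectivization K (Fin 2 → K) :=
  Projectivization.mk K ![a, b] (fun h0 => hab
    ⟨by simpa using congrFun h0 0, by simpa using congrFun h0 1⟩)

/-- An `F₂`-linear set of points of `PG(1,q)`: in characteristic two, the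
`F₂`-subspaces of `K²` are exactly its additive subgroups. -/
def IsF2Linear (T : Set (Projectivization K (Fin 2 → K))) : Prop :=
  ∃ U : AddSubgroup (Fin 2 → K),
    T = {P | ∃ u : Fin 2 → K, ∃ hu : u ≠ 0, u ∈ U ∧ Projectivization.mk K u hu = P}

/-- Lines of `PG(2,q)`: two-dimensional subspaces of `K³`. -/
def IsLine (L : Submodule K (Fin 3 → K)) : Prop := Module.finrank K L = 2

/-- Incidence of a point with a line. -/
def OnLine (P : Pt K) (L : Submodule K (Fin 3 → K)) : Prop := P.submodule ≤ L

/-- The number of points of `A` lying on the line `L`. -/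
def secantCount (A : Set (Pt K)) (L : Submodule K (Fin 3 → K)) : ℕ :=
  {P ∈ A | OnLine P L}.ncard

/-- A KM-arc of type `t`: `q+t` points meeting every line in `0`, `2` or `t` points. -/
def IsKMArc (q t : ℕ) (A : Set (Pt K)) : Prop :=
  A.ncard = q + t ∧ ∀ L : Submodule K (Fin 3 → K), IsLine L →
    secantCount A L = 0 ∨ secantCount A L = 2 ∨ secantCount A L = t

/-- The projectivity of `PG(2,q)` induced by an element of `GL(3,q)`. -/
def projMap (f : (Fin 3 → K) ≃ₗ[K] (Fin 3 → K)) : Pt K → Pt K :=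
  Projectivization.map f.toLinearMap f.injective

/-- `f` induces an elation with axis `L` and centre `R`: it fixes every point of `L`
and maps every line through `R` to itself. -/
def IsElation (f : (Fin 3 → K) ≃ₗ[K] (Fin 3 → K)) (L : Submodule K (Fin 3 → K))
    (R : Pt K) : Prop :=
  IsLine L ∧ OnLine R L ∧ (∀ P : Pt K, OnLine P L → projMap f P = P) ∧
    ∀ M : Submodule K (Fin 3 → K), IsLine M → OnLine R M →
      ∀ P : Pt K, OnLine P M → OnLine (projMap f P) M

/-- `f` induces an elation with axis `L` (for some centre on `L`). -/
def IsElationAxis (f : (Fin 3 → K) ≃ₗ[K] (Fin 3 → K)) (L : Submodule K (Fin 3 → K)) : Prop :=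
  ∃ R : Pt K, IsElation f L R

/-- The projectivity induced by `f` stabilises the point set `A`. -/
def Stabilises (f : (Fin 3 → K) ≃ₗ[K] (Fin 3 → K)) (A : Set (Pt K)) : Prop :=
  projMap f '' A = A

/-- `N` lies on every `t`-secant of `A` (i.e. `N` is the `t`-nucleus). -/
def IsNucleus (t : ℕ) (A : Set (Pt K)) (N : Pt K) : Prop :=
  ∀ L : Submodule K (Fin 3 → K), IsLine L → secantCount A L = t → OnLine N L

/-- An elation KM-arc of type `t` with `t`-nucleus `N` and elation line `linf`:
for every `t`-secant `L ≠ linf`, the group of elations with axis `linf` stabilising `A`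
acts transitively on `A ∩ L`. -/
def IsElationKMArc (q t : ℕ) (A : Set (Pt K)) (N : Pt K)
    (linf : Submodule K (Fin 3 → K)) : Prop :=
  IsKMArc q t A ∧ IsLine linf ∧ OnLine N linf ∧ IsNucleus t A N ∧
    ∀ L : Submodule K (Fin 3 → K), IsLine L → secantCount A L = t → L ≠ linf →
      ∀ P ∈ A, OnLine P L → ∀ Q ∈ A, OnLine Q L →
        ∃ f : (Fin 3 → K) ≃ₗ[K] (Fin 3 → K),
          IsElationAxis f linf ∧ Stabilises f A ∧ projMap f P = Q

/-- A translation KM-arc with translation line `l`: the group of elations with axis `l`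
stabilising `A` acts transitively on `A \ l`. -/
def IsTranslationKMArc (A : Set (Pt K)) (l : Submodule K (Fin 3 → K)) : Prop :=
  IsLine l ∧ ∀ P ∈ A, ¬OnLine P l → ∀ Q ∈ A, ¬OnLine Q l →
    ∃ f : (Fin 3 → K) ≃ₗ[K] (Fin 3 → K),
      IsElationAxis f l ∧ Stabilises f A ∧ projMap f P = Q

/-- The line `X = 0` of `PG(2,q)`. -/
def lineX0 (K : Type*) [Field K] : Submodule K (Fin 3 → K) :=
  LinearMap.ker (LinearMap.proj (R := K) (φ := fun _ : Fin 3 => K) 0)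

/-- The line `Y = aX` of `PG(2,q)`. -/
def lineYaX (a : K) : Submodule K (Fin 3 → K) where
  carrier := {v | v 1 = a * v 0}
  add_mem' := by
    intro v w hv hw
    simp only [Set.mem_setOf_eq, Pi.add_apply] at hv hw ⊢
    rw [hv, hw]; ring
  zero_mem' := by simp
  smul_mem' := by
    intro c v hv
    simp only [Set.mem_setOf_eq, Pi.smul_apply, smul_eq_mul] at hv ⊢
    rw [hv]; ring

/-- The point set of the `q/8`-construction (Theorem 4.4 of the paper), built from
`F₂`-independent `a 0, a 1, a 2` and coset representatives `b 0, b 1, b 2`. -/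
def q8Arc (h : ℕ) (a b : Fin 3 → K) : Set (Pt K) :=
  {P | ∃ x : K, (∀ i, Tr h (a i ^ 2 * x) = 0) ∧ P = pt3 0 1 x (by simp)}
    ∪ {P | ∃ l : Fin 3 → K, (∀ i, l i = 0 ∨ l i = 1) ∧ ∃ s : K, (∀ i, Tr h (a i * s) = 0) ∧
        P = pt3 1 (l 0 * a 0 + l 1 * a 1 + l 2 * a 2)
          ((l 0 + l 1 + l 2 + l 1 * l 2) * b 0 + (l 1 + l 2 + l 0 * l 2) * b 1
            + (l 2 + l 0 * l 1) * b 2 + s) (by simp)}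

/-- The point set of the `q/16`-construction (Theorem 5.2 of the paper). -/
def q16Arc (h : ℕ) (a : Fin 4 → K) (α : K) (b : Fin 3 → K) : Set (Pt K) :=
  {P | ∃ x : K, Tr h (a 0 * (a 0 + a 3) * x) = 0 ∧ Tr h (a 1 * (a 1 + a 3) * x) = 0 ∧
      Tr h (a 2 * (a 2 + a 3) * x) = 0 ∧ Tr h (a 3 * α * x) = 1 ∧ P = pt3 0 1 x (by simp)}
    ∪ {P | ∃ l : Fin 4 → K, (∀ i, l i = 0 ∨ l i = 1) ∧ ∃ s : K, (∀ i, Tr h (a i * s) = 0) ∧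
        P = pt3 1 (l 0 * a 0 + l 1 * a 1 + l 2 * a 2 + l 3 * a 3)
          ((l 0 + l 1 + l 2 + l 1 * l 2) * b 0 + (l 1 + l 2 + l 0 * l 2) * b 1
            + (l 2 + l 0 * l 1) * b 2 + s) (by simp)}

/-- The semilinear collineation of `PG(2,q)` sending the point spanned by `v`
to the point spanned by `M (ψ ∘ v)`. -/
def frobMap (ψ : K ≃+* K) (M : (Fin 3 → K) ≃ₗ[K] (Fin 3 → K)) (P : Pt K) : Pt K :=
  Projectivization.mk K (M fun i => ψ (P.rep i)) (by
    rw [LinearEquiv.map_ne_zero_iff]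
    intro h0
    apply P.rep_nonzero
    funext i
    have h2 : P.rep i = 0 := ψ.injective (by rw [map_zero]; exact congrFun h0 i)
    simpa using h2)

/-!
Let `D` be the orthogonal of `S` under the trace form of `K`, a group of order four. Each
assumption `aS + bS = {x | Tr h (k * x) = 0}` puts `k * a` and `k * b` into `D`, and since
`0, k * a, k * b` make up more than half of `D`, they place `D` inside a scaled copy
`δ • {t | Tr 3 t = 0}` of a trace hyperplane. Hence `k = δ * c`, where `c` is the nonzero element
of `F₈` orthogonal to `a` and `b` for the trace form of `F₈`.

Interpolating `1, X, Y` at `1, α, β` by `f x = A x + B x² + C x⁴`, the additivity of `f` turns all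
four equations into the same condition `Tr h (δ * (B c⁵ + C c³)) = 1`, imposed on the four values
`c ∈ F₈` with `Tr 3 (m * c) = 1`, where `m = 1 + α + β`. If `z ∈ F₈` satisfies `z³ = z² + 1`, then
`z / m, z² / m, z⁴ / m` are three of these values, and both their cubes and their fifth powers sum
to zero; adding their equations gives `0 = 1 + 1 + 1`.
-/

theorem le_of_card_lt_two_mul_card_inf {G : Type*} [AddGroup G] {D H : AddSubgroup G} [Finite D]
    (hcard : Nat.card D < 2 * Nat.card (D ⊓ H : AddSubgroup G)) : D ≤ H := by
  obtain ⟨m, hm⟩ := AddSubgroup.card_dvd_of_le (inf_le_left : D ⊓ H ≤ D)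
  have hm2 : m < 2 := by
    rw [hm, mul_comm] at hcard
    exact lt_of_mul_lt_mul_right hcard (Nat.zero_le _)
  have hDH : Nat.card D ≤ Nat.card (D ⊓ H : AddSubgroup G) :=
    hm.trans_le (mul_le_of_le_one_right (Nat.zero_le _) (Nat.le_of_lt_succ hm2))
  exact inf_eq_left.1 (AddSubgroup.eq_of_le_of_card_ge inf_le_left hDH)

theorem smulSub_one (S : AddSubgroup K) : smulSub 1 S = S := by
  ext x
  simp [smulSub]

theorem Tr_three (x : K) : Tr 3 x = x + x ^ 2 + x ^ 4 := by
  simp [Tr, Finset.sum_range_succ]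

section

variable [CharP K 2]

theorem add_pow_eight_eq_self {x y : K} (hx : x ^ 8 = x) (hy : y ^ 8 = y) :
    (x + y) ^ 8 = x + y := by
  grind

/-- The trace sum `Tr h` as an additive homomorphism, so that its kernel is an additive subgroup. -/
def trHom (h : ℕ) : K →+ K where
  toFun := Tr h
  map_zero' := by simp [Tr]
  map_add' x y := by
    simp only [Tr, ← Finset.sum_add_distrib, add_pow_char_pow]

theorem Tr_add (h : ℕ) (x y : K) : Tr h (x + y) = Tr h x + Tr h y :=
  (trHom h).map_add x y

theorem Tr_three_eq_zero_or_one {x : K} (hx : x ^ 8 = x) : Tr 3 x = 0 ∨ Tr 3 x = 1 := by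
  have hidem : Tr 3 x * (Tr 3 x - 1) = 0 := by
    rw [Tr_three]
    grind
  exact (mul_eq_zero.1 hidem).imp_right sub_eq_zero.1

/-- The cross product on `F₈` (encoded as the `x` with `x ^ 8 = x`): for `F₂`-independent `a, b` it
is the nonzero element orthogonal to both under the trace form `(x, y) ↦ Tr 3 (x * y)`. -/
def traceCross (a b : K) : K := a ^ 2 * b ^ 4 + a ^ 4 * b ^ 2

theorem traceCross_eq_sq (a b : K) : traceCross a b = (a * b * (a + b)) ^ 2 := by
  unfold traceCross
  grind

theorem traceCross_ne_zero {a b : K} (ha : a ≠ 0) (hb : b ≠ 0) (hab : a ≠ b) :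
    traceCross a b ≠ 0 := by
  rw [traceCross_eq_sq]
  exact pow_ne_zero 2 (mul_ne_zero (mul_ne_zero ha hb) (mt CharTwo.add_eq_zero.1 hab))

theorem traceCross_sq {a b : K} (ha : a ^ 8 = a) (hb : b ^ 8 = b) :
    traceCross a b ^ 2 = a ^ 4 * b + a * b ^ 4 := by
  unfold traceCross
  grind

theorem traceCross_pow_four {a b : K} (ha : a ^ 8 = a) (hb : b ^ 8 = b) :
    traceCross a b ^ 4 = a * b ^ 2 + a ^ 2 * b := by
  unfold traceCross
  grind

/-- The Moore determinant of `a, b, c` over `F₂`, which tests their `F₂`-independence: the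
determinant with rows `(a, b, c)`, `(a², b², c²)`, `(a⁴, b⁴, c⁴)`, expanded along the first row.
There are no signs because the characteristic is two. -/
def mooreDet (a b c : K) : K :=
  a * traceCross b c + b * traceCross a c + c * traceCross a b

theorem mooreDet_eq_prod (a b c : K) :
    mooreDet a b c = a * b * c * (a + b) * (a + c) * (b + c) * (a + b + c) := by
  unfold mooreDet traceCross
  grind

theorem mooreDet_ne_zero_iff {a b c : K} :
    mooreDet a b c ≠ 0 ↔ a ≠ 0 ∧ b ≠ 0 ∧ c ≠ 0 ∧ a ≠ b ∧ a ≠ c ∧ b ≠ c ∧ a + b + c ≠ 0 := by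
  simp only [mooreDet_eq_prod, mul_ne_zero_iff, Ne, CharTwo.add_eq_zero (a := a) (b := b),
    CharTwo.add_eq_zero (a := a) (b := c), CharTwo.add_eq_zero (a := b) (b := c), and_assoc]

theorem mooreDet_self_left (a b : K) : mooreDet a a b = 0 := by
  rw [mooreDet_eq_prod, CharTwo.add_self_eq_zero]
  ring

theorem mooreDet_self_right (a b : K) : mooreDet a b a = 0 := by
  rw [mooreDet_eq_prod, CharTwo.add_self_eq_zero]
  ring

theorem mooreDet_swap (a b c : K) : mooreDet b a c = mooreDet a b c := by
  rw [mooreDet_eq_prod, mooreDet_eq_prod]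
  ring

theorem mooreDet_rotate (a b c : K) : mooreDet c a b = mooreDet a b c := by
  rw [mooreDet_eq_prod, mooreDet_eq_prod]
  ring

theorem Tr_three_mul_traceCross {a b c : K} (hb : b ^ 8 = b) (hc : c ^ 8 = c) :
    Tr 3 (a * traceCross b c) = mooreDet a b c := by
  rw [Tr_three, mul_pow, mul_pow, traceCross_sq hb hc, traceCross_pow_four hb hc]
  unfold mooreDet traceCross
  ring

theorem mooreDet_mul (a b c x : K) :
    mooreDet a b c * x = Tr 3 (a * x) * traceCross b c + Tr 3 (b * x) * traceCross a c
      + Tr 3 (c * x) * traceCross a b := by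
  simp only [Tr_three, mooreDet, traceCross]
  grind

theorem traceCross_pow_eight {a b : K} (ha : a ^ 8 = a) (hb : b ^ 8 = b) :
    traceCross a b ^ 8 = traceCross a b := by
  unfold traceCross
  grind

theorem mooreDet_eq_one {a b c : K} (ha : a ^ 8 = a) (hb : b ^ 8 = b) (hc : c ^ 8 = c)
    (hne : mooreDet a b c ≠ 0) : mooreDet a b c = 1 := by
  have hfix : (a * traceCross b c) ^ 8 = a * traceCross b c := by
    rw [mul_pow, ha, traceCross_pow_eight hb hc]
  rw [← Tr_three_mul_traceCross hb hc] at hne ⊢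
  exact (Tr_three_eq_zero_or_one hfix).resolve_left hne

theorem eq_traceCross_of_Tr_three_mul_eq_zero {a b c : K} (ha : a ^ 8 = a) (hb : b ^ 8 = b)
    (ha0 : a ≠ 0) (hb0 : b ≠ 0) (hab : a ≠ b) (hc0 : c ≠ 0)
    (hac : Tr 3 (c * a) = 0) (hbc : Tr 3 (c * b) = 0) : c = traceCross a b := by
  have helim : c * traceCross a b * (traceCross a b - c) = 0 := by
    rw [Tr_three] at hac hbc
    linear_combination (norm := skip) b ^ 4 * hac + a ^ 4 * hbc + c * traceCross_sq ha hb
      - (a ^ 4 * b ^ 4 * c ^ 4 + c ^ 2 * traceCross a b) * CharTwo.two_eq_zero (R := K)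
    unfold traceCross
    ring
  have hne := mul_ne_zero hc0 (traceCross_ne_zero ha0 hb0 hab)
  exact (sub_eq_zero.1 ((mul_eq_zero.1 helim).resolve_left hne)).symm

theorem eq_traceCross_of_Tr_three_mul_eq_one {a b c x : K} (ha : a ^ 8 = a) (hb : b ^ 8 = b)
    (hc : c ^ 8 = c) (hdet : mooreDet a b c = 1) (hx : x ^ 8 = x)
    (htr : Tr 3 ((a + b + c) * x) = 1) :
    x = traceCross a b ∨ x = traceCross a c ∨ x = traceCross b c ∨
      x = traceCross (b + a) (c + a) := by
  have hexp := mooreDet_mul a b c x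
  rw [add_mul, add_mul, Tr_add, Tr_add] at htr
  have hfour : traceCross (b + a) (c + a) = traceCross b c + traceCross a c + traceCross a b := by
    unfold traceCross
    grind
  have hdich {y : K} (hy : y ^ 8 = y) : Tr 3 (y * x) = 0 ∨ Tr 3 (y * x) = 1 :=
    Tr_three_eq_zero_or_one (by rw [mul_pow, hy, hx])
  rcases hdich ha with h₁ | h₁ <;> rcases hdich hb with h₂ | h₂ <;>
    rcases hdich hc with h₃ | h₃ <;> rw [h₁, h₂, h₃] at htr hexp <;> grind

/-- The linearized polynomial `A x + B x² + C x⁴`; on `F₈` these polynomials interpolate the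
`F₂`-linear maps. -/
def linPoly (A B C x : K) : K := A * x + B * x ^ 2 + C * x ^ 4

theorem linPoly_add (A B C x y : K) :
    linPoly A B C (x + y) = linPoly A B C x + linPoly A B C y := by
  unfold linPoly
  grind

theorem exists_linPoly_eq {a b c : K} (ha : a ^ 8 = a) (hb : b ^ 8 = b) (hc : c ^ 8 = c)
    (hdet : mooreDet a b c = 1) (u v w : K) :
    ∃ A B C, linPoly A B C a = u ∧ linPoly A B C b = v ∧ linPoly A B C c = w := by
  have hexpand (x : K) :
      linPoly (u * traceCross b c + v * traceCross a c + w * traceCross a b)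
          (u * traceCross b c ^ 2 + v * traceCross a c ^ 2 + w * traceCross a b ^ 2)
          (u * traceCross b c ^ 4 + v * traceCross a c ^ 4 + w * traceCross a b ^ 4) x
        = u * mooreDet x b c + v * mooreDet x a c + w * mooreDet x a b := by
    simp only [← Tr_three_mul_traceCross, ha, hb, hc, Tr_three, linPoly]
    ring
  refine ⟨_, _, _, (hexpand a).trans ?_, (hexpand b).trans ?_, (hexpand c).trans ?_⟩
  · rw [mooreDet_self_left, mooreDet_self_left, hdet]
    ring
  · rw [mooreDet_self_left, mooreDet_self_right, mooreDet_swap, hdet]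
    ring
  · rw [mooreDet_self_right, mooreDet_self_right, mooreDet_rotate, hdet]
    ring

theorem traceCross_mul_linPoly {a b : K} (ha : a ^ 8 = a) (hb : b ^ 8 = b) (A B C : K) :
    traceCross a b * (a * linPoly A B C b + b * linPoly A B C a)
      = B * traceCross a b ^ 5 + C * traceCross a b ^ 3 := by
  have hwedge : a * linPoly A B C b + b * linPoly A B C a
      = B * traceCross a b ^ 4 + C * traceCross a b ^ 2 := by
    rw [traceCross_pow_four ha hb, traceCross_sq ha hb]
    unfold linPoly
    grind
  rw [hwedge]
  ring

theorem exists_pow_three_eq_sq_add_one {a : K} (ha : a ^ 8 = a) (ha0 : a ≠ 0) (ha1 : a ≠ 1) :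
    ∃ z : K, z ^ 3 = z ^ 2 + 1 := by
  have hfactor :
      (a * (a - 1)) * ((a ^ 3 - (a ^ 2 + 1)) * ((a + 1) ^ 3 - ((a + 1) ^ 2 + 1))) = 0 := by
    grind
  have hne : a * (a - 1) ≠ 0 := mul_ne_zero ha0 (sub_ne_zero.2 ha1)
  rcases mul_eq_zero.1 ((mul_eq_zero.1 hfactor).resolve_left hne) with h | h
  exacts [⟨a, sub_eq_zero.1 h⟩, ⟨a + 1, sub_eq_zero.1 h⟩]

theorem exists_Tr_three_mul_eq_one_and_map_ne_one {a m : K} (ha : a ^ 8 = a) (ha0 : a ≠ 0)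
    (ha1 : a ≠ 1) (hm : m ^ 8 = m) (hm0 : m ≠ 0) (φ : K →+ K) (B C : K) :
    ∃ x : K, x ^ 8 = x ∧ Tr 3 (m * x) = 1 ∧ φ (B * x ^ 5 + C * x ^ 3) ≠ 1 := by
  by_contra! hall
  obtain ⟨z, hz⟩ := exists_pow_three_eq_sq_add_one ha ha0 ha1
  have hone {y : K} (hy : y ^ 8 = y) (htr : Tr 3 y = 1) :
      φ (B * (m⁻¹ * y) ^ 5 + C * (m⁻¹ * y) ^ 3) = 1 :=
    hall _ (by rw [mul_pow, inv_pow, hm, hy]) (by rw [mul_inv_cancel_left₀ hm0, htr])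
  have h₁ := hone (y := z) (by grind) (by rw [Tr_three]; grind)
  have h₂ := hone (y := z ^ 2) (by grind) (by rw [Tr_three]; grind)
  have h₄ := hone (y := z ^ 4) (by grind) (by rw [Tr_three]; grind)
  have hcubes : z ^ 3 + (z ^ 2) ^ 3 + (z ^ 4) ^ 3 = 0 := by grind
  have hfifths : z ^ 5 + (z ^ 2) ^ 5 + (z ^ 4) ^ 5 = 0 := by grind
  have hsum : φ 0 = 1 + 1 + 1 := by
    nth_rw 1 [← h₁, ← h₂, ← h₄]
    rw [← map_add, ← map_add]
    congr 1
    linear_combination -B * m⁻¹ ^ 5 * hfifths - C * m⁻¹ ^ 3 * hcubes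
  rw [map_zero] at hsum
  grind

/-- The orthogonal of an additive subgroup under the trace form `(x, y) ↦ Tr h (x * y)`. -/
def trPerp (h : ℕ) (S : AddSubgroup K) : AddSubgroup K where
  carrier := {z | ∀ s ∈ S, Tr h (z * s) = 0}
  zero_mem' s _ := by rw [zero_mul]; exact (trHom h).map_zero
  add_mem' hx hy s hs := by rw [add_mul, Tr_add, hx s hs, hy s hs, add_zero]
  neg_mem' hx s hs := by rw [CharTwo.neg_eq]; exact hx s hs

theorem card_mul_card_trPerp [Fintype K] {h : ℕ} (hcard : Fintype.card K = 2 ^ h)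
    (S : AddSubgroup K) : Nat.card S * Nat.card (trPerp h S) = 2 ^ h := by
  let : Algebra (ZMod 2) K := ZMod.algebra K 2
  have hfinrank : Module.finrank (ZMod 2) K = h := by
    have hpow := Module.card_eq_pow_finrank (K := ZMod 2) (V := K)
    rw [hcard, ZMod.card] at hpow
    exact (Nat.pow_right_injective le_rfl hpow).symm
  have htrace (x : K) : algebraMap (ZMod 2) K (Algebra.trace (ZMod 2) K x) = Tr h x := by
    rw [FiniteField.algebraMap_trace_eq_sum_pow, hfinrank, Nat.card_zmod, Tr]
  let W : Submodule (ZMod 2) K := AddSubgroup.toZModSubmodule 2 S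
  let W' := (Algebra.traceForm (ZMod 2) K).orthogonal W
  have hperp : (trPerp h S : Set K) = W' := by
    ext z
    refine forall₂_congr fun s _ => ?_
    rw [← htrace, Algebra.traceForm_apply, mul_comm s z, map_eq_zero]
  have hcardW' : Nat.card W' = Nat.card (trPerp h S) :=
    congrArg (fun s : Set K => Nat.card s) hperp.symm
  have hcardW (V : Submodule (ZMod 2) K) : Nat.card V = 2 ^ Module.finrank (ZMod 2) V := by
    rw [Module.natCard_eq_pow_finrank (K := ZMod 2), Nat.card_zmod]
  rw [← hcardW', show Nat.card S = Nat.card W from rfl, hcardW, hcardW, ← pow_add,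
    LinearMap.BilinForm.finrank_orthogonal (traceForm_nondegenerate (ZMod 2) K),
    Nat.add_sub_cancel' (Submodule.finrank_le W), hfinrank]

theorem card_trPerp_of_card_eq_div [Fintype K] {h n : ℕ} (hcard : Fintype.card K = 2 ^ h)
    {S : AddSubgroup K} (hS : Nat.card S = 2 ^ h / 2 ^ n) : Nat.card (trPerp h S) = 2 ^ n := by
  have hdvd : 2 ^ n ∣ 2 ^ h := pow_dvd_pow 2 <| (Nat.pow_le_pow_iff_right one_lt_two).1 <|
    (Nat.div_pos_iff.1 (hS ▸ Nat.card_pos)).2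
  apply Nat.eq_of_mul_eq_mul_left (Nat.card_pos (α := S))
  rw [card_mul_card_trPerp hcard, hS, Nat.div_mul_cancel hdvd]

theorem mul_mem_trPerp {h : ℕ} {S : AddSubgroup K} {a k : K}
    (hle : ∀ x ∈ smulSub a S, Tr h (k * x) = 0) : k * a ∈ trPerp h S := fun s hs => by
  rw [mul_assoc]
  exact hle _ ⟨s, hs, rfl⟩

theorem mul_mem_trPerp_of_sup_eq {h : ℕ} {S : AddSubgroup K} {a b k : K}
    (hsup : ((smulSub a S ⊔ smulSub b S : AddSubgroup K) : Set K) = {x : K | Tr h (k * x) = 0}) :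
    k * a ∈ trPerp h S ∧ k * b ∈ trPerp h S :=
  ⟨mul_mem_trPerp fun _ hx => hsup.le (SetLike.le_def.1 le_sup_left hx),
   mul_mem_trPerp fun _ hx => hsup.le (SetLike.le_def.1 le_sup_right hx)⟩

theorem exists_le_smulSub_ker_trHom_three [Finite K] {D : AddSubgroup K} (hD : Nat.card D ≤ 4)
    {a b k : K} (ha : a ^ 8 = a) (hb : b ^ 8 = b) (ha0 : a ≠ 0) (hb0 : b ≠ 0) (hab : a ≠ b)
    (hk0 : k ≠ 0) (hka : k * a ∈ D) (hkb : k * b ∈ D) :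
    ∃ δ : K, D ≤ smulSub δ (trHom 3).ker := by
  refine ⟨k / traceCross a b, le_of_card_lt_two_mul_card_inf ?_⟩
  have hmem {x : K} (hdet : mooreDet x a b = 0) :
      k * x ∈ smulSub (k / traceCross a b) (trHom 3).ker := by
    refine ⟨x * traceCross a b, (Tr_three_mul_traceCross ha hb).trans hdet, ?_⟩
    have := traceCross_ne_zero ha0 hb0 hab
    simp only [AddMonoidHom.coe_mulLeft]
    field_simp
  let E : AddSubgroup K := D ⊓ smulSub (k / traceCross a b) (trHom 3).ker
  have hthree : 2 < (E : Set K).ncard := (Set.two_lt_ncard_iff (Set.toFinite _)).2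
    ⟨0, k * a, k * b, zero_mem E, ⟨hka, hmem (mooreDet_self_left a b)⟩,
      ⟨hkb, hmem (mooreDet_self_right b a)⟩, (mul_ne_zero hk0 ha0).symm,
      (mul_ne_zero hk0 hb0).symm, (mul_right_injective₀ hk0).ne hab⟩
  have hcardE : Nat.card E = (E : Set K).ncard := Nat.card_coe_set_eq _
  lia

theorem eq_mul_traceCross_of_le_smulSub {D : AddSubgroup K} {δ : K}
    (hle : D ≤ smulSub δ (trHom 3).ker) {a b k : K} (ha : a ^ 8 = a) (hb : b ^ 8 = b)
    (ha0 : a ≠ 0) (hb0 : b ≠ 0) (hab : a ≠ b) (hk0 : k ≠ 0) (hka : k * a ∈ D)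
    (hkb : k * b ∈ D) : k = δ * traceCross a b := by
  have hδ0 : δ ≠ 0 := by
    rintro rfl
    obtain ⟨t, -, ht⟩ := hle hka
    exact mul_ne_zero hk0 ha0 (ht.symm.trans (zero_mul t))
  have htr {x : K} (hx : k * x ∈ D) : Tr 3 (k / δ * x) = 0 := by
    obtain ⟨t, ht, hδt⟩ := hle hx
    rw [div_mul_eq_mul_div, ← hδt, AddMonoidHom.coe_mulLeft, mul_div_cancel_left₀ _ hδ0]
    exact ht
  rw [← eq_traceCross_of_Tr_three_mul_eq_zero ha hb ha0 hb0 hab (div_ne_zero hk0 hδ0)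
    (htr hka) (htr hkb), mul_div_cancel₀ _ hδ0]

theorem exists_forall_eq_mul_traceCross [Finite K] {h : ℕ} {S : AddSubgroup K}
    (hperp : Nat.card (trPerp h S) ≤ 4) {a b k : K} (ha : a ^ 8 = a) (hb : b ^ 8 = b)
    (ha0 : a ≠ 0) (hb0 : b ≠ 0) (hab : a ≠ b) (hk0 : k ≠ 0)
    (hsup : ((smulSub a S ⊔ smulSub b S : AddSubgroup K) : Set K) = {x : K | Tr h (k * x) = 0}) :
    ∃ δ : K, ∀ {c d l : K}, c ^ 8 = c → d ^ 8 = d → c ≠ 0 → d ≠ 0 → c ≠ d → l ≠ 0 →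
      ((smulSub c S ⊔ smulSub d S : AddSubgroup K) : Set K) = {x : K | Tr h (l * x) = 0} →
      l = δ * traceCross c d := by
  obtain ⟨hka, hkb⟩ := mul_mem_trPerp_of_sup_eq hsup
  obtain ⟨δ, hδ⟩ := exists_le_smulSub_ker_trHom_three hperp ha hb ha0 hb0 hab hk0 hka hkb
  refine ⟨δ, fun hc hd hc0 hd0 hcd hl0 hl => ?_⟩
  obtain ⟨hlc, hld⟩ := mul_mem_trPerp_of_sup_eq hl
  exact eq_mul_traceCross_of_le_smulSub hδ hc hd hc0 hd0 hcd hl0 hlc hld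

theorem not_map_traceCross_mul_eq_one {a b c : K} (ha : a ^ 8 = a) (hb : b ^ 8 = b)
    (hc : c ^ 8 = c) (hdet : mooreDet a b c = 1) (φ : K →+ K) (u v w : K) :
    ¬(φ (traceCross a b * (a * v + b * u)) = 1 ∧ φ (traceCross a c * (a * w + c * u)) = 1 ∧
      φ (traceCross b c * (b * w + c * v)) = 1 ∧
      φ (traceCross (b + a) (c + a) * ((b + a) * (w + u) + (c + a) * (v + u))) = 1) := by
  rintro ⟨hφab, hφac, hφbc, hφabc⟩
  obtain ⟨A, B, C, rfl, rfl, rfl⟩ := exists_linPoly_eq ha hb hc hdet u v w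
  rw [← linPoly_add, ← linPoly_add,
    traceCross_mul_linPoly (add_pow_eight_eq_self hb ha) (add_pow_eight_eq_self hc ha)] at hφabc
  rw [traceCross_mul_linPoly ha hb] at hφab
  rw [traceCross_mul_linPoly ha hc] at hφac
  rw [traceCross_mul_linPoly hb hc] at hφbc
  obtain ⟨ha0, hb0, -, hab, -, -, habc⟩ := mooreDet_ne_zero_iff.1 (hdet.trans_ne one_ne_zero)
  obtain ⟨x, hx, htr, hφ⟩ := exists_Tr_three_mul_eq_one_and_map_ne_one (a := b / a)
    (by rw [div_pow, ha, hb]) (div_ne_zero hb0 ha0) (mt (div_eq_one_iff_eq ha0).1 hab.symm)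
    (add_pow_eight_eq_self (add_pow_eight_eq_self ha hb) hc) habc φ B C
  rcases eq_traceCross_of_Tr_three_mul_eq_one ha hb hc hdet hx htr with rfl | rfl | rfl | rfl <;>
    contradiction

end

/-- Lemma 3.8: the stated trace system has no solution `(X,Y) ∈ F_q²`. -/
theorem no_solutions
    {K : Type*} [Field K] [Fintype K] (h : ℕ) (h3 : 3 ∣ h)
    (hcard : Fintype.card K = 2 ^ h)
    (α β : K) (hα : α ^ 8 = α) (hβ : β ^ 8 = β)
    (hα0 : α ≠ 0) (hα1 : α ≠ 1) (hβ0 : β ≠ 0) (hβ1 : β ≠ 1)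
    (hβα : β ≠ α) (hβα1 : β ≠ α + 1)
    (S : AddSubgroup K) (hS : Nat.card S = 2 ^ h / 4)
    (k₁ k₂ k₃ k₄ : K)
    (hk0 : k₁ ≠ 0 ∧ k₂ ≠ 0 ∧ k₃ ≠ 0 ∧ k₄ ≠ 0)
    (hkdist : k₁ ≠ k₂ ∧ k₁ ≠ k₃ ∧ k₁ ≠ k₄ ∧ k₂ ≠ k₃ ∧ k₂ ≠ k₄ ∧ k₃ ≠ k₄)
    (e1 : ((S ⊔ smulSub α S : AddSubgroup K) : Set K) = {x : K | Tr h (k₁ * x) = 0})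
    (e2 : ((S ⊔ smulSub β S : AddSubgroup K) : Set K) = {x : K | Tr h (k₂ * x) = 0})
    (e3 : ((smulSub α S ⊔ smulSub β S : AddSubgroup K) : Set K) = {x : K | Tr h (k₃ * x) = 0})
    (e4 : ((smulSub (α + 1) S ⊔ smulSub (β + 1) S : AddSubgroup K) : Set K)
        = {x : K | Tr h (k₄ * x) = 0}) :
    ¬ ∃ X Y : K, Tr h (k₁ * (X + α)) = 1 ∧ Tr h (k₂ * (Y + β)) = 1 ∧
      Tr h (k₃ * (α * Y + β * X)) = 1 ∧
      Tr h (k₄ * ((α + β) + (β + 1) * X + (α + 1) * Y)) = 1 := by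
  rintro ⟨X, Y, h₁, h₂, h₃, h₄⟩
  have : CharP K 2 := charP_of_card_eq_prime_pow hcard
  obtain ⟨hk₁, hk₂, hk₃, hk₄⟩ := hk0
  have hdet : mooreDet 1 α β = 1 := mooreDet_eq_one (one_pow 8) hα hβ <|
    mooreDet_ne_zero_iff.2 ⟨one_ne_zero, hα0, hβ0, hα1.symm, hβ1.symm, hβα.symm,
      fun h0 => hβα1 (by rw [← CharTwo.add_eq_zero.1 h0, add_comm])⟩
  nth_rw 1 [← smulSub_one S] at e1 e2
  have hperp : Nat.card (trPerp h S) = 2 ^ 2 := card_trPerp_of_card_eq_div hcard hS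
  obtain ⟨δ, hδ⟩ := exists_forall_eq_mul_traceCross hperp.le (one_pow 8) hα one_ne_zero hα0
    hα1.symm hk₁ e1
  have hc₁ := hδ (one_pow 8) hα one_ne_zero hα0 hα1.symm hk₁ e1
  have hc₂ := hδ (one_pow 8) hβ one_ne_zero hβ0 hβ1.symm hk₂ e2
  have hc₄ := hδ (add_pow_eight_eq_self hα (one_pow 8)) (add_pow_eight_eq_self hβ (one_pow 8))
    (mt CharTwo.add_eq_zero.1 hα1) (mt CharTwo.add_eq_zero.1 hβ1)
    ((add_left_injective 1).ne hβα.symm) hk₄ e4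
  let φ : K →+ K := (trHom h).comp (AddMonoidHom.mulLeft δ)
  have hφ {k c x : K} (hc : k = δ * c) (hx : Tr h (k * x) = 1) : φ (c * x) = 1 := by
    rwa [hc, mul_assoc] at hx
  refine not_map_traceCross_mul_eq_one (one_pow 8) hα hβ hdet φ 1 X Y
    ⟨hφ hc₁ (by rwa [one_mul, mul_one]), hφ hc₂ (by rwa [one_mul, mul_one]),
      hφ (hδ hα hβ hα0 hβ0 hβα.symm hk₃ e3) h₃, hφ hc₄ ?_⟩
  rwa [show (α + 1) * (Y + 1) + (β + 1) * (X + 1)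
    = α + β + (β + 1) * X + (α + 1) * Y by grind]
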